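/- arXiv:1411.3173 — 7 statements merged into one kernel-verified Lean document; each statement's English description precedes it below -/
import Mathlib

section
/- Let (X_t)_{t∈T} be a family of nonempty topological spaces, X = ∏_{t∈T} X_t, a ∈ X, and let E ⊆ X be ℵ₀-invariant with respect to a. If E (with the subspace topology) is pseudo-ℵ₁-compact, then for every finite nonempty set S ⊆ T and every uncountable family (U_i)_{i∈I} of open subsets of X with U_i ∩ E ≠ ∅ for all i ∈ I, the family (p_S(U_i ∩ E))_{i∈I} is not locally finite in the subspace p_S(E). -/
/-!
A family of projections that is locally finite in `p_S(E)` pulls back along the continuous map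
`p_S : E → p_S(E)`, and the traces `U i ∩ E` shrink this pullback, so they are locally finite
in `E`. Being nonempty and open, they form a countable set of sets, and by local finiteness
each of them occurs for only finitely many `i`. Hence the index set is countable.
-/


open Set Topology

/-- A topological space is pseudo-ℵ₁-compact if every locally finite family of
(pairwise distinct) nonempty open subsets is at most countable. -/
def PseudoAleph1Compact (Z : Type*) [TopologicalSpace Z] : Prop :=
  ∀ 𝒰 : Set (Set Z), (∀ U ∈ 𝒰, IsOpen U) → (∀ U ∈ 𝒰, U.Nonempty) →
    LocallyFinite (fun U : 𝒰 => (U : Set Z)) → 𝒰.Countable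

/-- `A` is functionally closed in `Z` if it is the zero set of a continuous real function. -/
def FunctionallyClosed {Z : Type*} [TopologicalSpace Z] (A : Set Z) : Prop :=
  ∃ f : Z → ℝ, Continuous f ∧ A = f ⁻¹' {0}

/-- `A` is functionally open in `Z` if its complement is functionally closed. -/
def FunctionallyOpen {Z : Type*} [TopologicalSpace Z] (A : Set Z) : Prop :=
  FunctionallyClosed Aᶜ

/-- `FunClass Z true α A` : `A` is of the functionally additive class `α` in `Z`;
`FunClass Z false α A` : `A` is of the functionally multiplicative class `α` in `Z`. -/
inductive FunClass (Z : Type*) [TopologicalSpace Z] : Bool → Ordinal.{0} → Set Z → Prop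
  | open_ (A : Set Z) (h : FunctionallyOpen A) : FunClass Z true 0 A
  | closed_ (A : Set Z) (h : FunctionallyClosed A) : FunClass Z false 0 A
  | union (α : Ordinal.{0}) (A : ℕ → Set Z) (β : ℕ → Ordinal.{0}) (hα : α ≠ 0)
      (hβ : ∀ n, β n < α) (h : ∀ n, FunClass Z false (β n) (A n)) :
      FunClass Z true α (⋃ n, A n)
  | inter (α : Ordinal.{0}) (A : ℕ → Set Z) (β : ℕ → Ordinal.{0}) (hα : α ≠ 0)
      (hβ : ∀ n, β n < α) (h : ∀ n, FunClass Z true (β n) (A n)) :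
      FunClass Z false α (⋂ n, A n)

/-- `A` is α-embedded in `Z` if every subset of `A` of functionally multiplicative class `α`
in the subspace `A` is the trace on `A` of a set of functionally multiplicative class `α` in `Z`. -/
def IsAlphaEmbedded {Z : Type*} [TopologicalSpace Z] (α : Ordinal.{0}) (A : Set Z) : Prop :=
  ∀ B : Set Z, B ⊆ A → FunClass ↥A false α (Subtype.val ⁻¹' B) →
    ∃ C : Set Z, FunClass Z false α C ∧ C ∩ A = B

/-- `Z` is α-universal if every subset of `Z` is α-embedded in `Z`. -/
def AlphaUniversal (Z : Type*) [TopologicalSpace Z] (α : Ordinal.{0}) : Prop :=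
  ∀ A : Set Z, IsAlphaEmbedded α A

/-- The projection of the product `∀ t, X t` onto the coordinates in `S`. -/
def proj {T : Type*} {X : T → Type*} (S : Set T) (x : ∀ t, X t) : ∀ t : S, X t.1 :=
  fun t => x t.1

/-- A functionally measurable (Baire) set: a member of some functionally additive or
multiplicative class `α` with `α < ω₁`. -/
def FunctionallyMeasurable {Z : Type*} [TopologicalSpace Z] (A : Set Z) : Prop :=
  ∃ (b : Bool) (β : Ordinal.{0}), β < (Cardinal.aleph 1).ord ∧ FunClass Z b β A

/-- `Y` has a regular `Gδ`-diagonal. -/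
def RegularGDeltaDiagonal (Y : Type*) [TopologicalSpace Y] : Prop :=
  ∃ G : ℕ → Set (Y × Y), (∀ n, IsOpen (G n)) ∧
    {p : Y × Y | p.1 = p.2} = ⋂ n, G n ∧
    {p : Y × Y | p.1 = p.2} = ⋂ n, closure (G n)

section LocallyFinite

variable {Y Z ι : Type*} [TopologicalSpace Y] [TopologicalSpace Z]

theorem finite_preimage_singleton_of_locallyFinite {V : ι → Set Z} (hV : LocallyFinite V)
    {W : Set Z} (hW : W.Nonempty) : (V ⁻¹' {W}).Finite := by
  obtain ⟨x, hx⟩ := hW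
  refine (hV.point_finite x).subset ?_
  rintro i rfl
  exact hx

theorem PseudoAleph1Compact.countable_of_locallyFinite (hZ : PseudoAleph1Compact Z)
    {V : ι → Set Z} (hopen : ∀ i, IsOpen (V i)) (hne : ∀ i, (V i).Nonempty)
    (hV : LocallyFinite V) : Countable ι := by
  have hrange : (range V).Countable :=
    hZ (range V) (forall_mem_range.2 hopen) (forall_mem_range.2 hne) hV.on_range
  have hfiber (W : Set Z) (hW : W ∈ range V) : (V ⁻¹' {W}).Countable :=
    (finite_preimage_singleton_of_locallyFinite hV (forall_mem_range.2 hne W hW)).countable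
  rw [← countable_univ_iff, ← biUnion_range_preimage_singleton V]
  exact hrange.biUnion hfiber

theorem locallyFinite_subtype_of_image {f : Z → Y} {E : Set Z} (hf : ContinuousOn f E)
    {A : ι → Set Z}
    (hA : LocallyFinite fun i => (Subtype.val ⁻¹' (f '' (A i ∩ E)) : Set ↥(f '' E))) :
    LocallyFinite fun i => (Subtype.val ⁻¹' A i : Set ↥E) :=
  (hA.preimage_continuous (hf.mapsToRestrict (mapsTo_image f E))).subset
    fun _ x hx => mem_image_of_mem f ⟨hx, x.2⟩

theorem statement0_general {E : Set Z} (hE : PseudoAleph1Compact ↥E) {f : Z → Y}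
    (hf : ContinuousOn f E) [Uncountable ι] {U : ι → Set Z} (hUopen : ∀ i, IsOpen (U i))
    (hUE : ∀ i, (U i ∩ E).Nonempty) :
    ¬ LocallyFinite fun i => (Subtype.val ⁻¹' (f '' (U i ∩ E)) : Set ↥(f '' E)) := by
  intro hlf
  have htrace_open (i : ι) : IsOpen (Subtype.val ⁻¹' U i : Set ↥E) :=
    (hUopen i).preimage continuous_subtype_val
  have htrace_nonempty (i : ι) : (Subtype.val ⁻¹' U i : Set ↥E).Nonempty :=
    let ⟨x, hxU, hxE⟩ := hUE i
    ⟨⟨x, hxE⟩, hxU⟩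
  exact not_countable <| hE.countable_of_locallyFinite htrace_open htrace_nonempty
    (locallyFinite_subtype_of_image hf hlf)

end LocallyFinite

theorem continuous_proj {T : Type*} {X : T → Type*} [∀ t, TopologicalSpace (X t)] (S : Set T) :
    Continuous (proj (X := X) S) :=
  Pi.continuous_domRestrict S

/-- If `E` is ℵ₀-invariant w.r.t. `a` and pseudo-ℵ₁-compact, then for every
finite nonempty `S ⊆ T` and every uncountable family of open sets meeting `E`, the family
of projections `p_S(U_i ∩ E)` is not locally finite in the subspace `p_S(E)`. -/
theorem statement0 {T : Type u} {X : T → Type v} [∀ t, TopologicalSpace (X t)]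
    [∀ t, Nonempty (X t)] (a : ∀ t, X t) (E : Set (∀ t, X t))
    (hinv : ∀ x ∈ E, ∀ S : Set T, S.Finite →
      ∀ z : ∀ t, X t, (∀ t ∈ S, z t = x t) → (∀ t ∉ S, z t = a t) → z ∈ E)
    (hE : PseudoAleph1Compact ↥E)
    (S : Set T) (hSfin : S.Finite) (hSne : S.Nonempty)
    (ι : Type w) [Uncountable ι] (U : ι → Set (∀ t, X t))
    (hUopen : ∀ i, IsOpen (U i)) (hUE : ∀ i, (U i ∩ E).Nonempty) :
    ¬ LocallyFinite (fun i : ι =>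
      (Subtype.val ⁻¹' (proj S '' (U i ∩ E)) : Set ↥(proj S '' E))) :=
  statement0_general hE (continuous_proj S).continuousOn hUopen hUE
end

section
/- Let (X_t)_{t∈T} be a family of nonempty topological spaces, X = ∏_{t∈T} X_t, a ∈ X, and let E ⊆ X be ℵ₀-invariant with respect to a. Suppose that for every finite nonempty set S ⊆ T and every uncountable family (U_i)_{i∈I} of open subsets of X with U_i ∩ E ≠ ∅ for all i ∈ I, the family (p_S(U_i ∩ E))_{i∈I} is not locally finite in the subspace p_S(E). Then E (with the subspace topology) is pseudo-ℵ₁-compact. -/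
/-!
Suppose an uncountable family of nonempty open subsets of `E` is locally finite, and shrink each
member to the trace on `E` of an open set `B i` depending only on a finite set `F i` of
coordinates. By the Δ-system lemma there is an uncountable subfamily in which any two of the `F i`
meet in the same finite set; enlarge this root to a nonempty finite set `S`. The projections
`p_S(B i ∩ E)` are then locally finite, contradicting the hypothesis. Indeed, let `x ∈ E` and let
`N` be a neighbourhood of `x^a_S ∈ E` meeting only finitely many `B i ∩ E`; up to shrinking, `N`
depends only on `S ∪ R` with `R` finite and disjoint from `S`. All but finitely many `F i` miss `R`,
and for those a point `y ∈ B i ∩ E` projecting close to `p_S(x)` can be replaced by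
`y^a_{S ∪ F i}`, which is still in `B i ∩ E` and, having the coordinates of `a` on `R`, lies in `N`.
-/

open Set Topology

section DeltaSystem

variable {T ι : Type*}

lemma exists_uncountable_pairwiseDisjoint {F : ι → Set T} {I : Set ι} (hI : ¬ I.Countable)
    (hF : ∀ i ∈ I, (F i).Countable) (hpoint : ∀ t, {i ∈ I | t ∈ F i}.Countable) :
    ∃ J ⊆ I, ¬ J.Countable ∧ J.PairwiseDisjoint F := by
  -- If a maximal disjoint subfamily `J` were countable, the union of the `F j`, `j ∈ J`, would meet
  -- only countably many of the `F i`, but by maximality it meets `F i` for every `i ∈ I \ J`.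
  obtain ⟨J, hJ⟩ := zorn_subset {J : Set ι | J ⊆ I ∧ J.PairwiseDisjoint F} fun c hc hchain =>
    ⟨⋃₀ c, ⟨sUnion_subset fun s hs => (hc hs).1,
      (pairwiseDisjoint_sUnion hchain.directedOn).2 fun s hs => (hc hs).2⟩,
      fun _ => subset_sUnion_of_mem⟩
  obtain ⟨hJI, hJdisj⟩ := hJ.prop
  refine ⟨J, hJI, fun hJcount => hI ?_, hJdisj⟩
  have hcount : (J ∪ ⋃ j ∈ J, ⋃ t ∈ F j, {i ∈ I | t ∈ F i}).Countable :=
    hJcount.union <| hJcount.biUnion fun j hj => (hF j (hJI hj)).biUnion fun t _ => hpoint t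
  refine hcount.mono fun i hi => or_iff_not_imp_right.2 fun hmeet => ?_
  have hdisj : ∀ j ∈ J, Disjoint (F i) (F j) := fun j hj =>
    Set.disjoint_left.2 fun t hti htj => hmeet <| mem_biUnion hj <| mem_biUnion htj ⟨hi, hti⟩
  exact hJ.le_of_ge ⟨insert_subset hi hJI, hJdisj.insert fun j hj _ => hdisj j hj⟩
    (subset_insert i J) (mem_insert i J)

variable [DecidableEq T]

/-- The finite sets `F i`, for `i ∈ J`, form a Δ-system with root `S`: any two of them with distinct
indices meet exactly in `S`. Repetitions `F i = F j = S` with `i ≠ j` are allowed. -/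
def IsDeltaSystem (F : ι → Finset T) (J : Set ι) (S : Finset T) : Prop :=
  J.Pairwise fun i j => F i ∩ F j = S

lemma IsDeltaSystem.insert_of_erase {F : ι → Finset T} {J : Set ι} {S : Finset T} {t : T}
    (h : IsDeltaSystem (fun i => (F i).erase t) J S) (ht : ∀ i ∈ J, t ∈ F i) :
    IsDeltaSystem F J (insert t S) := fun i hi j hj hij => by
  rw [← h hi hj hij, Finset.insert_inter_distrib, Finset.insert_erase (ht i hi),
    Finset.insert_erase (ht j hj)]

lemma IsDeltaSystem.subsingleton_setOf_mem {F : ι → Finset T} {J : Set ι} {S : Finset T}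
    (h : IsDeltaSystem F J S) {t : T} (ht : t ∉ S) : {i : J | t ∈ F i}.Subsingleton :=
  fun i hi j hj => by
    by_contra hij
    exact ht <| h i.2 j.2 (Subtype.coe_ne_coe.2 hij) ▸ Finset.mem_inter.2 ⟨hi, hj⟩

lemma exists_uncountable_isDeltaSystem_of_card_eq {n : ℕ} {F : ι → Finset T} {I : Set ι}
    (hI : ¬ I.Countable) (hcard : ∀ i ∈ I, (F i).card = n) :
    ∃ J ⊆ I, ¬ J.Countable ∧ ∃ S, IsDeltaSystem F J S := by
  induction n generalizing F I with
  | zero =>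
    refine ⟨I, Subset.rfl, hI, ∅, fun i hi j _ _ => ?_⟩
    simp only [Finset.card_eq_zero.1 (hcard i hi), Finset.empty_inter]
  | succ n ih =>
    by_cases hpoint : ∀ t, {i ∈ I | t ∈ F i}.Countable
    · obtain ⟨J, hJI, hJ, hdisj⟩ := exists_uncountable_pairwiseDisjoint
        (F := fun i => (F i : Set T)) hI (fun i _ => (F i).countable_toSet) hpoint
      exact ⟨J, hJI, hJ, ∅, fun i hi j hj hij =>
        Finset.disjoint_iff_inter_eq_empty.1 <| Finset.disjoint_coe.1 <| hdisj hi hj hij⟩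
    · obtain ⟨t, ht⟩ := not_forall.1 hpoint
      obtain ⟨J, hJI, hJ, S, hS⟩ := ih (F := fun i => (F i).erase t) ht fun i hi => by
        rw [Finset.card_erase_of_mem hi.2, hcard i hi.1, Nat.add_sub_cancel]
      exact ⟨J, fun i hi => (hJI hi).1, hJ, insert t S, hS.insert_of_erase fun i hi => (hJI hi).2⟩

theorem exists_uncountable_isDeltaSystem [Uncountable ι] (F : ι → Finset T) :
    ∃ J : Set ι, ¬ J.Countable ∧ ∃ S, IsDeltaSystem F J S := by
  obtain ⟨n, hn⟩ : ∃ n, ¬ {i | (F i).card = n}.Countable := by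
    by_contra! hcount
    refine not_countable_univ (α := ι) ((countable_iUnion hcount).mono fun i _ => ?_)
    exact mem_iUnion.2 ⟨(F i).card, rfl⟩
  obtain ⟨J, -, hJ⟩ := exists_uncountable_isDeltaSystem_of_card_eq hn fun _ hi => hi
  exact ⟨J, hJ⟩

end DeltaSystem

lemma locallyFinite_preimage_val_iff {Z ι : Type*} [TopologicalSpace Z] {E : Set Z}
    {A : ι → Set Z} :
    LocallyFinite (fun i => (Subtype.val ⁻¹' A i : Set E)) ↔
      ∀ z ∈ E, ∃ N ∈ 𝓝 z, {i | (A i ∩ E ∩ N).Nonempty}.Finite := by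
  constructor
  · intro h z hz
    obtain ⟨N', hN', hfin⟩ := h ⟨z, hz⟩
    obtain ⟨N, hN, hNN'⟩ := (mem_nhds_subtype E ⟨z, hz⟩ N').1 hN'
    refine ⟨N, hN, hfin.subset ?_⟩
    rintro i ⟨y, ⟨hyA, hyE⟩, hyN⟩
    exact ⟨⟨y, hyE⟩, hyA, hNN' hyN⟩
  · rintro h ⟨z, hz⟩
    obtain ⟨N, hN, hfin⟩ := h z hz
    refine ⟨Subtype.val ⁻¹' N, continuous_subtype_val.continuousAt hN, hfin.subset ?_⟩
    rintro i ⟨y, hyA, hyN⟩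
    exact ⟨y, ⟨hyA, y.2⟩, hyN⟩

section Product

variable {T : Type*} {X : T → Type*}

lemma exists_isOpen_dependsOn_finset_preimage_val_subset [∀ t, TopologicalSpace (X t)]
    {E : Set (∀ t, X t)} {U : Set E} (hU : IsOpen U) {x : E} (hx : x ∈ U) :
    ∃ (F : Finset T) (B : Set (∀ t, X t)),
      IsOpen B ∧ DependsOn (· ∈ B) (F : Set T) ∧ x.1 ∈ B ∧ Subtype.val ⁻¹' B ⊆ U := by
  obtain ⟨V, hV, rfl⟩ := isOpen_induced_iff.1 hU
  obtain ⟨F, u, hu, hsub⟩ := isOpen_pi_iff.1 hV x hx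
  refine ⟨F, (F : Set T).pi u, isOpen_set_pi F.finite_toSet fun t ht => (hu t ht).1, ?_,
    fun t ht => (hu t ht).2, preimage_mono hsub⟩
  exact fun y z hyz => propext <| forall₂_congr fun t ht => by rw [hyz t ht]

variable [DecidableEq T]

/-- `E` is `ℵ₀`-invariant with respect to `a`. The point `x^a_S` of the paper is
`S.piecewise x a`. -/
def IsAleph0Invariant (a : ∀ t, X t) (E : Set (∀ t, X t)) : Prop :=
  ∀ x ∈ E, ∀ S : Finset T, S.piecewise x a ∈ E

variable [∀ t, TopologicalSpace (X t)] {a : ∀ t, X t}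

lemma exists_nhds_proj_forall_piecewise_mem {x : ∀ t, X t} {S : Finset T} {N : Set (∀ t, X t)}
    (hN : N ∈ 𝓝 (S.piecewise x a)) :
    ∃ W ∈ 𝓝 (proj (S : Set T) x), ∃ R : Finset T, Disjoint R S ∧
      ∀ y, proj (S : Set T) y ∈ W → ∀ F : Finset T, Disjoint R F →
        (S ∪ F).piecewise y a ∈ N := by
  rw [nhds_pi, Filter.mem_pi'] at hN
  obtain ⟨Q, w, hw, hwN⟩ := hN
  have hwx : ∀ t ∈ S, w t ∈ 𝓝 (x t) := fun t ht => by
    simpa only [Finset.piecewise_eq_of_mem _ _ _ ht] using hw t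
  have hwa : ∀ t ∉ S, a t ∈ w t := fun t ht => by
    simpa only [Finset.piecewise_eq_of_notMem _ _ _ ht] using mem_of_mem_nhds (hw t)
  refine ⟨univ.pi fun t : (S : Set T) => w t,
    set_pi_mem_nhds finite_univ fun t _ => hwx t t.2, Q \ S, Finset.sdiff_disjoint,
    fun y hy F hF => hwN fun t htQ => ?_⟩
  by_cases htS : t ∈ S
  · rw [Finset.piecewise_eq_of_mem _ _ _ (Finset.mem_union_left F htS)]
    exact hy ⟨t, htS⟩ (mem_univ _)
  · have htF : t ∉ F := Finset.disjoint_left.1 hF (Finset.mem_sdiff.2 ⟨htQ, htS⟩)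
    rw [Finset.piecewise_eq_of_notMem _ _ _ (Finset.notMem_union.2 ⟨htS, htF⟩)]
    exact hwa t htS

theorem IsAleph0Invariant.locallyFinite_image_proj {ι : Type*} {E : Set (∀ t, X t)}
    (hE : IsAleph0Invariant a E) {B : ι → Set (∀ t, X t)} {F : ι → Finset T}
    (hB : ∀ i, DependsOn (· ∈ B i) (F i : Set T)) {S : Finset T}
    (hF : ∀ t ∉ S, {i | t ∈ F i}.Finite)
    (hfin : LocallyFinite fun i => (Subtype.val ⁻¹' B i : Set E)) :
    LocallyFinite fun i => (Subtype.val ⁻¹' (proj (S : Set T) '' (B i ∩ E)) :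
      Set (proj (S : Set T) '' E)) := by
  rw [locallyFinite_preimage_val_iff] at hfin ⊢
  rintro _ ⟨x, hx, rfl⟩
  obtain ⟨N, hN, hNfin⟩ := hfin _ (hE x hx S)
  obtain ⟨W, hW, R, hRS, hWN⟩ := exists_nhds_proj_forall_piecewise_mem hN
  have hRfin : {i | ¬ Disjoint R (F i)}.Finite := by
    simp only [Finset.not_disjoint_iff, ← exists_prop, ofPred_exists]
    exact R.finite_toSet.biUnion fun t ht => hF t (Finset.disjoint_left.1 hRS ht)
  refine ⟨W, hW, (hNfin.union hRfin).subset ?_⟩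
  rintro i ⟨_, ⟨⟨y, ⟨hyB, hyE⟩, rfl⟩, -⟩, hyW⟩
  refine or_iff_not_imp_right.2 fun hRi => ?_
  have hmemB : (S ∪ F i).piecewise y a ∈ B i := (hB i fun t ht =>
    Finset.piecewise_eq_of_mem _ _ _ (Finset.mem_union_right S ht)).mpr hyB
  exact ⟨_, ⟨hmemB, hE y hyE _⟩, hWN y hyW (F i) (not_not.1 hRi)⟩

end Product

/-- converse of statement 0: if for every finite nonempty `S ⊆ T` every
uncountable family of open sets meeting `E` projects to a family which is not locally
finite in `p_S(E)`, then the ℵ₀-invariant set `E` is pseudo-ℵ₁-compact. -/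
theorem statement1 {T : Type u} {X : T → Type v} [∀ t, TopologicalSpace (X t)]
    [∀ t, Nonempty (X t)] (a : ∀ t, X t) (E : Set (∀ t, X t))
    (hinv : ∀ x ∈ E, ∀ S : Set T, S.Finite →
      ∀ z : ∀ t, X t, (∀ t ∈ S, z t = x t) → (∀ t ∉ S, z t = a t) → z ∈ E)
    (h : ∀ S : Set T, S.Finite → S.Nonempty →
      ∀ (ι : Type (max u v)), Uncountable ι → ∀ U : ι → Set (∀ t, X t),
        (∀ i, IsOpen (U i)) → (∀ i, (U i ∩ E).Nonempty) →
        ¬ LocallyFinite (fun i : ι =>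
          (Subtype.val ⁻¹' (proj S '' (U i ∩ E)) : Set ↥(proj S '' E)))) :
    PseudoAleph1Compact ↥E := by
  classical
  intro 𝒰 hopen hne hfin
  by_contra h𝒰
  have hE : IsAleph0Invariant a E := fun x hx S => hinv x hx S S.finite_toSet _
    (fun _ => S.piecewise_eq_of_mem x a) (fun _ => S.piecewise_eq_of_notMem x a)
  obtain ⟨t₀⟩ : Nonempty T := by
    by_contra! hT
    -- For empty `T` the product is a single point.
    exact h𝒰 (to_countable 𝒰)
  choose x hx using fun U : 𝒰 => hne U U.2
  choose F B hB hBF hxB hBU using fun U : 𝒰 =>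
    exists_isOpen_dependsOn_finset_preimage_val_subset (hopen U U.2) (hx U)
  have : Uncountable 𝒰 := not_countable_iff.1 h𝒰
  obtain ⟨J, hJ, S, hS⟩ := exists_uncountable_isDeltaSystem F
  have hpoint : ∀ t ∉ insert t₀ S, {i : J | t ∈ F i}.Finite := fun t ht =>
    (hS.subsingleton_setOf_mem fun htS => ht (Finset.mem_insert_of_mem htS)).finite
  have hBfin : LocallyFinite fun i : J => (Subtype.val ⁻¹' B i : Set E) :=
    (hfin.comp_injective Subtype.val_injective).subset fun i => hBU i
  exact h (insert t₀ S : Finset T) (Finset.finite_toSet _) (Finset.insert_nonempty t₀ S) J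
    (not_countable_iff.1 hJ) (fun i => B i) (fun i => hB i) (fun i => ⟨x i, hxB i, (x i).2⟩)
    (hE.locallyFinite_image_proj (F := fun i : J => F i) (fun i => hBF i) hpoint hBfin)
end

section
/- There exist an index set T, a family (X_t)_{t∈T} of nonempty topological spaces with product X = ∏_{t∈T} X_t, a point a ∈ X, and a set E ⊆ X which is (ℵ₁,ℵ₁)-invariant with respect to a, such that p_S(E) is pseudo-ℵ₁-compact for every nonempty finite set S ⊆ T, but E itself (with the subspace topology) is not pseudo-ℵ₁-compact. -/
/-!
Let `Y` be a separable T₁ space with an uncountable family of points `e i` whose singletons form a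
locally finite family, and let `a` be a further point of `Y`. In `Y ^ Option ι`, let `x (some i)`
differ from `a` only by being `e i`, and only if the main coordinate `x none` is `e i` or `a`.
A finite set of coordinates sees only finitely many of these exceptional values, so up to finitely
many points the projection is a continuous image of `Y`, hence separable. All coordinates together,
however, make `{x | x none = e i}` contain a nonempty open set for every `i`, and these
uncountably many open sets inherit local finiteness from the singletons `{e i}`.

The square of the Sorgenfrey line is such a `Y`, by means of its antidiagonal.
-/

open Set Topology

open TopologicalSpace Filter

namespace PseudoAleph1Compact

variable {ι Z : Type*} [TopologicalSpace Z]

theorem of_separableSpace [SeparableSpace Z] : PseudoAleph1Compact Z := by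
  intro 𝒰 hopen hne hfin
  obtain ⟨C, hC, hdense⟩ := exists_countable_dense Z
  have hcover : 𝒰 ⊆ ⋃ c ∈ C, (↑) '' {U : 𝒰 | c ∈ (U : Set Z)} := by
    intro U hU
    obtain ⟨c, hcU, hcC⟩ := hdense.inter_open_nonempty U (hopen U hU) (hne U hU)
    exact mem_iUnion₂.2 ⟨c, hcC, ⟨U, hU⟩, hcU, rfl⟩
  exact (hC.biUnion fun c _ => ((hfin.point_finite c).image _).countable).mono hcover

theorem countable_of_locallyFinite_s2 (hZ : PseudoAleph1Compact Z) {U : ι → Set Z}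
    (hopen : ∀ i, IsOpen (U i)) (hne : ∀ i, (U i).Nonempty) (hfin : LocallyFinite U) :
    Countable ι := by
  have : Countable (range U) :=
    hZ (range U) (forall_mem_range.2 hopen) (forall_mem_range.2 hne) hfin.on_range
  refine Countable.of_preimage_singleton (f := rangeFactorization U) ?_
  rintro ⟨_, i, rfl⟩
  obtain ⟨z, hz⟩ := hne i
  have hfiber : rangeFactorization U ⁻¹' {⟨U i, i, rfl⟩} ⊆ {j | z ∈ U j} := by
    intro j hj
    have hji : U j = U i := congrArg Subtype.val hj
    exact hji.ge hz
  exact ((hfin.point_finite z).subset hfiber).countable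

end PseudoAleph1Compact

theorem separableSpace_of_countable_compl_range {Y Z : Type*} [TopologicalSpace Y]
    [SeparableSpace Y] [TopologicalSpace Z] {f : Y → Z} (hf : Continuous f)
    (hrange : (range f)ᶜ.Countable) : SeparableSpace Z := by
  rw [← isSeparable_univ_iff, ← union_compl_self (range f)]
  exact (isSeparable_range hf).union hrange.isSeparable

/-- The set of points of the power `Y ^ Option ι` in which every coordinate `some i` is tied to the
main coordinate `none`: it equals `a`, unless the main coordinate is `e i` or `a`, when it may also
be `e i`. Allowing the value `a` of the main coordinate makes the set invariant with respect to the
point constantly equal to `a`. -/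
def tiedSet {ι Y : Type*} (e : ι → Y) (a : Y) : Set (Option ι → Y) :=
  {x | ∀ i, x (some i) = a ∨ x (some i) = e i ∧ (x none = e i ∨ x none = a)}

namespace tiedSet

variable {ι Y : Type*} {e : ι → Y} {a : Y}

theorem mem_of_eq_or_eq_base {x z : Option ι → Y} (hx : x ∈ tiedSet e a) {S : Set (Option ι)}
    (hzx : ∀ t ∈ S, z t = x t) (hza : ∀ t ∉ S, z t = a) : z ∈ tiedSet e a := by
  intro i
  by_cases hi : some i ∈ S
  · rw [hzx _ hi]
    refine (hx i).imp_right fun ⟨hxi, hxnone⟩ => ⟨hxi, ?_⟩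
    by_cases hnone : none ∈ S
    · rwa [hzx _ hnone]
    · exact Or.inr (hza _ hnone)
  · exact Or.inl (hza _ hi)

/-- The map of `Y` into a projection of `tiedSet e a` which places `y` at the main coordinate and
`a` at all others. -/
def projMain (e : ι → Y) (a : Y) (S : Set (Option ι)) (y : Y) : ↥(proj S '' tiedSet e a) :=
  ⟨proj S fun t => t.elim y fun _ => a, mem_image_of_mem _ fun _ => Or.inl rfl⟩

theorem finite_compl_range_projMain (e : ι → Y) (a : Y) {S : Set (Option ι)} (hS : S.Finite) :
    (range (projMain e a S))ᶜ.Finite := by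
  have : Finite S := hS
  let F : Set Y := insert a (e '' (some ⁻¹' S))
  have hF : F.Finite := ((hS.preimage (Option.some_injective ι).injOn).image e).insert a
  have hcube : {z : ↥(proj S '' tiedSet e a) | ∀ t, z.1 t ∈ F}.Finite :=
    (Finite.pi' fun _ : S => hF).preimage Subtype.val_injective.injOn
  refine hcube.subset (compl_subset_comm.1 ?_)
  rintro ⟨_, x, hx, rfl⟩ hxF
  have hxnone : x none ∉ F := by
    refine fun hmain => hxF ?_
    rintro ⟨_ | i, hi⟩
    · exact hmain
    · exact (hx i).imp id fun h => ⟨i, hi, h.1.symm⟩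
  refine ⟨x none, Subtype.ext (funext ?_)⟩
  rintro ⟨_ | i, hi⟩
  · rfl
  · rcases hx i with hxi | ⟨-, hxe | hxa⟩
    · exact hxi.symm
    · exact absurd (Or.inr ⟨i, hi, hxe.symm⟩) hxnone
    · exact absurd (Or.inl hxa) hxnone

/-- The relatively open set of those points of `tiedSet e a` in which both the main coordinate and
the coordinate `some i` differ from `a`; the tie then forces both to be `e i`. -/
def awayFromBase (e : ι → Y) (a : Y) (i : ι) : Set ↥(tiedSet e a) :=
  {x | x.1 none ≠ a ∧ x.1 (some i) ≠ a}

theorem awayFromBase_subset (e : ι → Y) (a : Y) (i : ι) :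
    awayFromBase e a i ⊆ (fun x => x.1 none) ⁻¹' {e i} := by
  rintro x ⟨hnone, hi⟩
  exact ((x.2 i).resolve_left hi).2.resolve_right hnone

theorem awayFromBase_nonempty {i : ι} (hi : e i ≠ a) : (awayFromBase e a i).Nonempty := by
  classical
  refine ⟨⟨fun t => t.elim (e i) (Function.update (fun _ => a) i (e i)), fun j => ?_⟩, hi, ?_⟩
  · rcases eq_or_ne j i with rfl | hj
    · exact Or.inr ⟨by simp only [Option.elim_some, Function.update_self], Or.inl rfl⟩
    · exact Or.inl (by simp only [Option.elim_some, Function.update_of_ne hj])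
  · simpa only [Option.elim_some, Function.update_self] using hi

variable [TopologicalSpace Y]

theorem continuous_projMain (e : ι → Y) (a : Y) (S : Set (Option ι)) :
    Continuous (projMain e a S) := by
  refine (continuous_pi ?_).subtype_mk _
  rintro ⟨_ | _, _⟩
  · exact continuous_id
  · exact continuous_const

theorem pseudoAleph1Compact_image_proj [SeparableSpace Y] (e : ι → Y) (a : Y)
    {S : Set (Option ι)} (hS : S.Finite) : PseudoAleph1Compact ↥(proj S '' tiedSet e a) := by
  have : SeparableSpace ↥(proj S '' tiedSet e a) :=
    separableSpace_of_countable_compl_range (continuous_projMain e a S)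
      (finite_compl_range_projMain e a hS).countable
  exact .of_separableSpace

theorem continuous_coord (e : ι → Y) (a : Y) (t : Option ι) :
    Continuous fun x : ↥(tiedSet e a) => x.1 t :=
  (continuous_apply t).comp continuous_subtype_val

theorem isOpen_awayFromBase [T1Space Y] (e : ι → Y) (a : Y) (i : ι) :
    IsOpen (awayFromBase e a i) :=
  (isOpen_ne.preimage (continuous_coord e a none)).inter
    (isOpen_ne.preimage (continuous_coord e a (some i)))

theorem not_pseudoAleph1Compact [T1Space Y] [Uncountable ι]
    (hfin : LocallyFinite fun i => {e i}) (ha : ∀ i, e i ≠ a) :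
    ¬ PseudoAleph1Compact ↥(tiedSet e a) := by
  intro hcompact
  have haway : LocallyFinite (awayFromBase e a) :=
    (hfin.preimage_continuous (continuous_coord e a none)).subset (awayFromBase_subset e a)
  exact not_countable (hcompact.countable_of_locallyFinite_s2 (isOpen_awayFromBase e a)
    (fun i => awayFromBase_nonempty (ha i)) haway)

end tiedSet

/-- The Sorgenfrey line: the reals with the topology generated by the half-open intervals
`[s, t)`. -/
@[ext]
structure SorgenfreyLine where
  toReal : ℝ

namespace SorgenfreyLine

/-- The point `x` encoded by its Dedekind cut `{t | t ≤ x}`. The Sorgenfrey topology is the one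
that makes every `[t, ∞)` clopen, that is, the one induced by this map into the Cantor cube. -/
noncomputable def cut (x : SorgenfreyLine) (t : ℝ) : Bool :=
  decide (t ≤ x.toReal)

noncomputable instance : TopologicalSpace SorgenfreyLine :=
  .induced cut inferInstance

theorem cut_injective : Function.Injective cut := by
  intro x y hxy
  have hle : ∀ t, t ≤ x.toReal ↔ t ≤ y.toReal := fun t => decide_eq_decide.1 (congrFun hxy t)
  exact SorgenfreyLine.ext (eq_of_forall_le_iff hle)

theorem isEmbedding_cut : IsEmbedding cut :=
  ⟨.induced cut, cut_injective⟩

instance : T35Space SorgenfreyLine :=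
  isEmbedding_cut.t35Space

theorem isClopen_le_toReal (t : ℝ) : IsClopen {x : SorgenfreyLine | t ≤ x.toReal} := by
  have hcut : Continuous fun x : SorgenfreyLine => cut x t :=
    (continuous_apply t).comp isEmbedding_cut.continuous
  simpa only [cut, preimage, mem_singleton_iff, decide_eq_true_eq] using
    (isClopen_discrete {true}).preimage hcut

theorem isOpen_toReal_lt (t : ℝ) : IsOpen {x : SorgenfreyLine | x.toReal < t} := by
  simpa only [compl_ofPred, not_le] using (isClopen_le_toReal t).compl.isOpen

theorem tendsto_mk_nhdsGE (x : ℝ) : Tendsto mk (𝓝[≥] x) (𝓝 ⟨x⟩) := by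
  rw [isEmbedding_cut.tendsto_nhds_iff, tendsto_pi_nhds]
  intro t
  refine tendsto_nhds_of_eventually_eq ?_
  rcases le_or_gt t x with htx | hxt
  · filter_upwards [self_mem_nhdsWithin] with y hxy
    exact decide_eq_decide.2 (iff_of_true (htx.trans hxy) htx)
  · filter_upwards [mem_nhdsWithin_of_mem_nhds (Iio_mem_nhds hxt)] with y hyt
    exact decide_eq_decide.2 (iff_of_false hyt.not_ge hxt.not_ge)

theorem denseRange_ratCast : DenseRange fun q : ℚ => (⟨q⟩ : SorgenfreyLine) := by
  rintro ⟨x⟩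
  obtain ⟨u, -, hxu, hu⟩ := Real.exists_seq_rat_strictAnti_tendsto x
  have hu' : Tendsto (fun n => (u n : ℝ)) atTop (𝓝[≥] x) :=
    tendsto_nhdsWithin_iff.2 ⟨hu, .of_forall fun n => (hxu n).le⟩
  exact mem_closure_of_tendsto ((tendsto_mk_nhdsGE x).comp hu') (.of_forall fun n => ⟨u n, rfl⟩)

instance : SeparableSpace SorgenfreyLine :=
  .of_denseRange _ denseRange_ratCast

/-- The antidiagonal of the Sorgenfrey plane, its standard uncountable closed discrete subset. -/
def antidiagonal (x : ℝ) : SorgenfreyLine × SorgenfreyLine :=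
  (⟨x⟩, ⟨-x⟩)

theorem locallyFinite_antidiagonal : LocallyFinite fun x => {antidiagonal x} := by
  rintro ⟨⟨u⟩, ⟨v⟩⟩
  rcases lt_or_ge (u + v) 0 with huv | huv
  · refine ⟨_, ((isOpen_toReal_lt ((u - v) / 2)).prod
      (isOpen_toReal_lt ((v - u) / 2))).mem_nhds ⟨?_, ?_⟩, ?_⟩
    · change u < (u - v) / 2
      linarith
    · change v < (v - u) / 2
      linarith
    · refine finite_empty.subset ?_
      rintro x ⟨_, rfl, hx, hx'⟩
      change x < (u - v) / 2 at hx
      change -x < (v - u) / 2 at hx'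
      exact absurd huv (by linarith)
  · refine ⟨_, ((isClopen_le_toReal u).isOpen.prod (isClopen_le_toReal v).isOpen).mem_nhds
      ⟨le_refl u, le_refl v⟩, ?_⟩
    refine (finite_singleton u).subset ?_
    rintro x ⟨_, rfl, hux, hvx⟩
    change u ≤ x at hux
    change v ≤ -x at hvx
    exact le_antisymm (by linarith) hux

theorem antidiagonal_ne_zero_one (x : ℝ) : antidiagonal x ≠ (⟨0⟩, ⟨1⟩) := by
  intro h
  have hx : x = 0 := congrArg (toReal ∘ Prod.fst) h
  have hx' : -x = 1 := congrArg (toReal ∘ Prod.snd) h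
  linarith

end SorgenfreyLine

open SorgenfreyLine in
theorem statement2_general : ∃ (T Y : Type) (_ : TopologicalSpace Y) (_ : T35Space Y) (a : Y)
    (E : Set (T → Y)),
    (∀ x ∈ E, ∀ S : Set T, ∀ z : T → Y, (∀ t ∈ S, z t = x t) → (∀ t ∉ S, z t = a) → z ∈ E) ∧
    (∀ S : Set T, S.Finite → PseudoAleph1Compact ↥(proj S '' E)) ∧
    ¬ PseudoAleph1Compact ↥E :=
  ⟨Option ℝ, SorgenfreyLine × SorgenfreyLine, inferInstance, inferInstance, (⟨0⟩, ⟨1⟩),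
    tiedSet antidiagonal (⟨0⟩, ⟨1⟩),
    fun _ hx _ _ => tiedSet.mem_of_eq_or_eq_base hx,
    fun _ => tiedSet.pseudoAleph1Compact_image_proj _ _,
    tiedSet.not_pseudoAleph1Compact locallyFinite_antidiagonal antidiagonal_ne_zero_one⟩

/-- there is an (ℵ₁,ℵ₁)-invariant set `E` in a product all of whose
projections onto finite nonempty sets of coordinates are pseudo-ℵ₁-compact, while `E`
itself is not pseudo-ℵ₁-compact. -/
theorem statement2 : ∃ (T : Type) (X : T → Type) (τ : ∀ t, TopologicalSpace (X t))
    (_ : ∀ t, Nonempty (X t)) (a : ∀ t, X t) (E : Set (∀ t, X t)),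
    letI : ∀ t, TopologicalSpace (X t) := τ
    (∀ x ∈ E, ∀ S : Set T, (S.Countable ∨ Sᶜ.Countable) →
      ∀ z : ∀ t, X t, (∀ t ∈ S, z t = x t) → (∀ t ∉ S, z t = a t) → z ∈ E) ∧
    (∀ S : Set T, S.Finite → S.Nonempty → PseudoAleph1Compact ↥(proj S '' E)) ∧
    ¬ PseudoAleph1Compact ↥E := by
  obtain ⟨T, Y, τ, -, a, E, hinv, hfin, hE⟩ := statement2_general
  exact ⟨T, fun _ => Y, fun _ => τ, fun _ => ⟨a⟩, fun _ => a, E,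
    fun x hx S _ => hinv x hx S, fun S hS _ => hfin S hS, hE⟩
end

section
/- Let Y be a topological space with a regular Gδ-diagonal, (X_t)_{t∈T} a family of nonempty topological spaces, X = ∏_{t∈T} X_t, a ∈ X, and let E ⊆ X be a set which, with the subspace topology, is pseudo-ℵ₁-compact and which is (ℵ₁,ℵ₀)-invariant with respect to a. Then for every continuous mapping f : E → Y there exist an at most countable set T₀ ⊆ T and a continuous mapping f₀ : p_{T₀}(E) → Y such that f = f₀ ∘ (p_{T₀}|_E). In particular, f depends on countably many coordinates. -/
/-!
Call a coordinate `t` essential for `f` if replacing `x t` by `a t` changes `f x` for some `x ∈ E`.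

Only countably many coordinates are essential. As `t` leaves every finite set, `update x t (a t)`
converges to `x` locally uniformly in `x`, because a basic open set restricts finitely many
coordinates. Hence for each `n` the open sets `{x | (f x, f (update x t (a t))) ∉ closure (G n)}`
form a locally finite family, where `G` witnesses the regular `Gδ`-diagonal of `Y`, and
pseudo-ℵ₁-compactness leaves only countably many of them nonempty. A coordinate is essential exactly
when one of its sets is nonempty for some `n`.

Let `T₀` be the set of essential coordinates. Replacing finitely many coordinates outside `T₀` does
not change `f x`, and the points so obtained converge to the point `x'` that agrees with `x` on `T₀`
and with `a` off it. Since `T₀` is countable, `x' ∈ E`, so `f x' = f x` by continuity, and `x'`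
depends continuously on the projection of `x` to `T₀`.
-/

open Set Topology

open Filter Function

theorem PseudoAleph1Compact.countable_setOf_nonempty {Z ι : Type*} [TopologicalSpace Z]
    (hZ : PseudoAleph1Compact Z) {W : ι → Set Z} (hW : LocallyFinite W)
    (hopen : ∀ i, IsOpen (W i)) : {i | (W i).Nonempty}.Countable := by
  have hvalues : Countable (W '' {i | (W i).Nonempty}) := by
    refine hZ _ (forall_mem_image.2 fun i _ => hopen i) (forall_mem_image.2 fun i hi => hi) ?_
    exact hW.on_range.comp_injective (inclusion_injective (image_subset_range W _))
  refine Countable.of_preimage_singleton (f := imageFactorization W {i | (W i).Nonempty}) ?_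
  rintro ⟨_, j, ⟨z, hz⟩, rfl⟩
  have hfinite : {i : {i | (W i).Nonempty} | z ∈ W i}.Finite :=
    (hW.comp_injective Subtype.val_injective).point_finite z
  refine (hfinite.subset fun i hi => ?_).countable
  have hij : W i = W j := congrArg Subtype.val hi
  exact hij.superset hz

theorem RegularGDeltaDiagonal.t2Space {Y : Type*} [TopologicalSpace Y]
    (hY : RegularGDeltaDiagonal Y) : T2Space Y := by
  obtain ⟨G, -, -, hclosure⟩ := hY
  have hdiag : diagonal Y = ⋂ n, closure (G n) := hclosure
  exact t2_iff_isClosed_diagonal.2 (hdiag ▸ isClosed_iInter fun _ => isClosed_closure)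

theorem locallyFinite_setOf_notMem_closure {Z Y ι : Type*} [TopologicalSpace Z]
    [TopologicalSpace Y] {f : Z → Y} (hf : Continuous f) {g : ι → Z → Y}
    (hgf : ∀ x, Tendsto ↿g (cofinite ×ˢ 𝓝 x) (𝓝 (f x)))
    {G : Set (Y × Y)} (hG : IsOpen G) (hdiag : diagonal Y ⊆ G) :
    LocallyFinite fun i => {x | (f x, g i x) ∉ closure G} := by
  intro x
  have hlim : Tendsto (fun p : ι × Z => (f p.2, g p.1 p.2)) (cofinite ×ˢ 𝓝 x) (𝓝 (f x, f x)) :=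
    ((hf.tendsto x).comp tendsto_snd).prodMk_nhds (hgf x)
  have hmem : ∀ᶠ p : ι × Z in cofinite ×ˢ 𝓝 x, (f p.2, g p.1 p.2) ∈ G :=
    hlim.eventually (hG.mem_nhds (hdiag rfl))
  obtain ⟨P, hP, V, hV, hPV⟩ := eventually_prod_iff.1 hmem
  refine ⟨{z | V z}, hV, (eventually_cofinite.1 hP).subset ?_⟩
  rintro i ⟨z, hz, hzV⟩ hi
  exact hz (subset_closure (hPV hi hzV))

theorem PseudoAleph1Compact.countable_setOf_ne {Z Y ι : Type*} [TopologicalSpace Z]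
    [TopologicalSpace Y] (hZ : PseudoAleph1Compact Z) (hY : RegularGDeltaDiagonal Y)
    {f : Z → Y} (hf : Continuous f) {g : ι → Z → Y} (hg : ∀ i, Continuous (g i))
    (hgf : ∀ x, Tendsto ↿g (cofinite ×ˢ 𝓝 x) (𝓝 (f x))) :
    {i | g i ≠ f}.Countable := by
  obtain ⟨G, hG, hinter, hclosure⟩ := hY
  have hdiag (n : ℕ) : diagonal Y ⊆ G n := hinter.subset.trans (iInter_subset G n)
  have hcount (n : ℕ) : {i | {x | (f x, g i x) ∉ closure (G n)}.Nonempty}.Countable :=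
    hZ.countable_setOf_nonempty (locallyFinite_setOf_notMem_closure hf hgf (hG n) (hdiag n))
      fun i => isClosed_closure.isOpen_compl.preimage (hf.prodMk (hg i))
  refine (countable_iUnion hcount).mono fun i hi => ?_
  obtain ⟨x, hx⟩ := Function.ne_iff.1 hi
  have hsep : (f x, g i x) ∉ ⋂ n, closure (G n) := hclosure ▸ hx.symm
  obtain ⟨n, hn⟩ := by simpa only [mem_iInter, not_forall] using hsep
  exact mem_iUnion.2 ⟨n, x, hn⟩

section Product

variable {T : Type*} {X : T → Type*} {Y : Type*} {a : ∀ t, X t} {E : Set (∀ t, X t)} {f : E → Y}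

theorem exists_continuous_factorization_proj [∀ t, TopologicalSpace (X t)]
    [TopologicalSpace Y] (hf : Continuous f) {S : Set T} [DecidablePred (· ∈ S)]
    (hS : MapsTo (fun x => S.piecewise x a) E E)
    (hfS : ∀ x y : E, y.1 = S.piecewise x.1 a → f y = f x) :
    ∃ f₀ : ↥(proj S '' E) → Y, Continuous f₀ ∧
      ∀ x : E, f x = f₀ ⟨proj S x.1, x.1, x.2, rfl⟩ := by
  let extend (z : ∀ t : S, X t) : ∀ t, X t :=
    (Homeomorph.piEquivPiSubtypeProd (· ∈ S) X).symm (z, fun t => a t)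
  have hextend : Continuous extend :=
    (Homeomorph.continuous_symm _).comp (continuous_id.prodMk continuous_const)
  have hproj (x : ∀ t, X t) : extend (proj S x) = S.piecewise x a := rfl
  have hmem (z : ↥(proj S '' E)) : extend z ∈ E := by
    obtain ⟨_, x, hx, rfl⟩ := z
    exact hS hx
  exact ⟨fun z => f ⟨extend z, hmem z⟩,
    hf.comp ((hextend.comp continuous_subtype_val).subtype_mk hmem),
    fun x => (hfS x _ (hproj x)).symm⟩

variable [DecidableEq T]

/-- The coordinates `t` such that resetting `x t` to `a t` changes `f x` for some `x ∈ E`. The reset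
point is quantified as an element `y` of `E`, so that `E` need not be stable under resetting. -/
def essentialCoords (a : ∀ t, X t) (f : E → Y) : Set T :=
  {t | ∃ x y : E, y.1 = update x.1 t (a t) ∧ f y ≠ f x}

theorem exists_eq_finset_piecewise_of_notMem_essentialCoords
    (hE : ∀ t, MapsTo (fun x => update x t (a t)) E E) (x : E) {F : Finset T}
    (hF : ∀ t ∈ F, t ∉ essentialCoords a f) :
    ∃ y : E, y.1 = F.piecewise a x.1 ∧ f y = f x := by
  induction F using Finset.induction_on with
  | empty => exact ⟨x, (Finset.piecewise_empty a x.1).symm, rfl⟩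
  | insert t F _ ih =>
    obtain ⟨y, hy, hfy⟩ := ih fun s hs => hF s (Finset.mem_insert_of_mem hs)
    have hreset : f ⟨update y.1 t (a t), hE t y.2⟩ = f y := by
      by_contra hne
      exact hF t (Finset.mem_insert_self t F) ⟨y, _, rfl, hne⟩
    exact ⟨⟨update y.1 t (a t), hE t y.2⟩, by simp only [hy, Finset.piecewise_insert],
      hreset.trans hfy⟩

variable [∀ t, TopologicalSpace (X t)]

theorem tendsto_update_cofinite_prod_nhds (a x : ∀ t, X t) :
    Tendsto (fun p : T × (∀ t, X t) => update p.2 p.1 (a p.1)) (cofinite ×ˢ 𝓝 x) (𝓝 x) := by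
  refine tendsto_pi_nhds.2 fun s => ?_
  have heval : Tendsto (fun p : T × (∀ t, X t) => p.2 s) (cofinite ×ˢ 𝓝 x) (𝓝 (x s)) :=
    ((continuous_apply s).tendsto x).comp tendsto_snd
  have hne : ∀ᶠ p : T × (∀ t, X t) in cofinite ×ˢ 𝓝 x, p.1 ≠ s :=
    tendsto_fst.eventually (eventually_cofinite_ne s)
  exact heval.congr' (hne.mono fun p hp => (update_of_ne hp.symm _ _).symm)

theorem tendsto_finset_piecewise (a x : ∀ t, X t) (S : Set T) [DecidablePred (· ∈ S)] :
    Tendsto (fun F : Finset T => {t ∈ F | t ∉ S}.piecewise a x) atTop (𝓝 (S.piecewise x a)) := by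
  refine tendsto_pi_nhds.2 fun t => tendsto_const_nhds.congr' ?_
  filter_upwards [eventually_ge_atTop {t}] with F hF
  have ht : t ∈ F := Finset.singleton_subset_iff.1 hF
  by_cases hS : t ∈ S <;> simp [hS, ht]

variable [TopologicalSpace Y]

theorem countable_essentialCoords (hcompact : PseudoAleph1Compact E)
    (hY : RegularGDeltaDiagonal Y) (hf : Continuous f)
    (hE : ∀ t, MapsTo (fun x => update x t (a t)) E E) : (essentialCoords a f).Countable := by
  let reset (t : T) : E → E := (hE t).restrict
  have hreset (t : T) : Continuous (reset t) :=
    (continuous_subtype_val.update t continuous_const).subtype_mk _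
  have hlim (x : E) : Tendsto ↿reset (cofinite ×ˢ 𝓝 x) (𝓝 x) :=
    tendsto_subtype_rng.2 <| (tendsto_update_cofinite_prod_nhds a x.1).comp <|
      tendsto_id.prodMap continuous_subtype_val.continuousAt
  have hcount : {t | f ∘ reset t ≠ f}.Countable :=
    hcompact.countable_setOf_ne hY hf (fun t => hf.comp (hreset t))
      fun x => (hf.tendsto x).comp (hlim x)
  refine hcount.mono ?_
  rintro t ⟨x, y, hy, hne⟩ heq
  have hyx : y = reset t x := Subtype.ext hy
  exact hne (hyx ▸ congrFun heq x)

theorem eq_of_eq_piecewise_essentialCoords [T1Space Y] [DecidablePred (· ∈ essentialCoords a f)]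
    (hf : Continuous f) (hE : ∀ t, MapsTo (fun x => update x t (a t)) E E) {x y : E}
    (hy : y.1 = (essentialCoords a f).piecewise x.1 a) : f y = f x := by
  choose z hz hfz using fun F : Finset T =>
    exists_eq_finset_piecewise_of_notMem_essentialCoords (f := f) hE x
      (F := {t ∈ F | t ∉ essentialCoords a f})
      fun t ht => (Finset.mem_filter.1 ht).2
  have hlim : Tendsto z atTop (𝓝 y) := by
    simpa only [tendsto_subtype_rng, hz, hy] using tendsto_finset_piecewise a x.1 _
  exact (isClosed_singleton.preimage hf).mem_of_tendsto hlim (Eventually.of_forall hfz)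

end Product

/-- every continuous map from a pseudo-ℵ₁-compact, (ℵ₁,ℵ₀)-invariant
subspace of a product into a space with a regular Gδ-diagonal factors continuously
through the projection onto countably many coordinates; in particular it depends on
countably many coordinates. -/
theorem statement3 {T : Type u} {X : T → Type v} [∀ t, TopologicalSpace (X t)]
    [∀ t, Nonempty (X t)] {Y : Type w} [TopologicalSpace Y]
    (hY : RegularGDeltaDiagonal Y)
    (a : ∀ t, X t) (E : Set (∀ t, X t))
    (hinv : ∀ x ∈ E, ∀ S : Set T, (S.Countable ∨ Sᶜ.Finite) →
      ∀ z : ∀ t, X t, (∀ t ∈ S, z t = x t) → (∀ t ∉ S, z t = a t) → z ∈ E)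
    (hE : PseudoAleph1Compact ↥E)
    (f : ↥E → Y) (hf : Continuous f) :
    ∃ T₀ : Set T, T₀.Countable ∧
      (∃ f₀ : ↥(proj T₀ '' E) → Y, Continuous f₀ ∧
        ∀ x : ↥E, f x = f₀ ⟨proj T₀ x.1, ⟨x.1, x.2, rfl⟩⟩) ∧
      (∀ x y : ↥E, proj T₀ x.1 = proj T₀ y.1 → f x = f y) := by
  classical
  have hpiecewise (S : Set T) (hS : S.Countable ∨ Sᶜ.Finite) :
      MapsTo (fun x => S.piecewise x a) E E := fun x hx =>
    hinv x hx S hS _ (fun _ => piecewise_eq_of_mem S x a) fun _ => piecewise_eq_of_notMem S x a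
  have hupdate (t : T) : MapsTo (fun x => update x t (a t)) E E := fun x hx =>
    hinv x hx {t}ᶜ (by simp) _ (fun _ hs => update_of_ne hs _ _) (by simp)
  have : T2Space Y := hY.t2Space
  have hcount : (essentialCoords a f).Countable := countable_essentialCoords hE hY hf hupdate
  obtain ⟨f₀, hf₀, hfac⟩ := exists_continuous_factorization_proj hf
    (hpiecewise _ (.inl hcount)) fun _ _ => eq_of_eq_piecewise_essentialCoords hf hupdate
  refine ⟨essentialCoords a f, hcount, ⟨f₀, hf₀, hfac⟩, fun x y hxy => ?_⟩
  simp only [hfac, hxy]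
end

section
/- If a topological space Z admits an uncountable locally finite family of nonempty open subsets, then Z admits an uncountable family of pairwise disjoint nonempty open subsets. -/
/-!
Call an open set small if it meets only countably many members of the given uncountable family `V`.
Local finiteness puts a nonempty small open set inside every `V i`. By maximality, this set, and
hence `V i`, meets some element of a maximal disjoint family of nonempty small open sets. If that
family were countable, its elements would altogether meet only countably many members of `V`.
-/

open Set Topology

theorem exists_pairwiseDisjoint_subset_forall_exists_not_disjoint {α : Type*} [PartialOrder α]
    [OrderBot α] (S : Set α) :
    ∃ T ⊆ S, T.PairwiseDisjoint id ∧ ∀ a ∈ S, a ≠ ⊥ → ∃ b ∈ T, ¬ Disjoint a b := by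
  obtain ⟨T, hT⟩ : ∃ T, Maximal (· ∈ {T : Set α | T ⊆ S ∧ T.PairwiseDisjoint id}) T :=
    zorn_subset _ fun c hc hchain =>
      ⟨⋃₀ c, ⟨sUnion_subset fun T hTc => (hc hTc).1,
        (pairwiseDisjoint_sUnion hchain.directedOn).2 fun T hTc => (hc hTc).2⟩,
        fun T hTc => subset_sUnion_of_mem hTc⟩
  obtain ⟨hTS, hdisj⟩ := hT.prop
  refine ⟨T, hTS, hdisj, fun a haS ha => ?_⟩
  by_contra! hforall
  have haT : a ∈ T := hT.mem_of_prop_insert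
    ⟨insert_subset haS hTS, hdisj.insert fun b hb _ => hforall b hb⟩
  exact ha (disjoint_self.1 (hforall a haT))

theorem exists_isOpen_subset_countable_setOf_inter_nonempty {Z ι : Type*} [TopologicalSpace Z]
    {V : ι → Set Z} {x : Z} (hV : ∃ t ∈ 𝓝 x, {i | (V i ∩ t).Nonempty}.Countable)
    {A : Set Z} (hA : A ∈ 𝓝 x) :
    ∃ U ⊆ A, IsOpen U ∧ U.Nonempty ∧ {i | (V i ∩ U).Nonempty}.Countable := by
  obtain ⟨t, ht, hcount⟩ := hV
  obtain ⟨U, hU, hUo, hxU⟩ := mem_nhds_iff.1 (Filter.inter_mem hA ht)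
  exact ⟨U, hU.trans inter_subset_left, hUo, ⟨x, hxU⟩, hcount.mono fun i hi =>
    hi.mono (inter_subset_inter_right _ (hU.trans inter_subset_right))⟩

theorem statement5_general {Z ι : Type*} [TopologicalSpace Z] [Uncountable ι] (V : ι → Set Z)
    (hint : ∀ i, (interior (V i)).Nonempty)
    (hcount : ∀ x, ∃ t ∈ 𝓝 x, {i | (V i ∩ t).Nonempty}.Countable) :
    ∃ 𝒲 : Set (Set Z), ¬ 𝒲.Countable ∧ (∀ W ∈ 𝒲, IsOpen W ∧ W.Nonempty) ∧
      𝒲.Pairwise Disjoint := by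
  obtain ⟨𝒲, hsmall, hdisj, hmax⟩ := exists_pairwiseDisjoint_subset_forall_exists_not_disjoint
    {W : Set Z | IsOpen W ∧ W.Nonempty ∧ {i | (V i ∩ W).Nonempty}.Countable}
  have hmeets : ∀ i, ∃ W ∈ 𝒲, (V i ∩ W).Nonempty := fun i => by
    obtain ⟨x, hx⟩ := hint i
    obtain ⟨U, hUV, hU⟩ := exists_isOpen_subset_countable_setOf_inter_nonempty (hcount x)
      (mem_interior_iff_mem_nhds.1 hx)
    obtain ⟨W, hW, hUW⟩ := hmax U hU hU.2.1.ne_empty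
    exact ⟨W, hW, (not_disjoint_iff_nonempty_inter.1 hUW).mono (inter_subset_inter_left W hUV)⟩
  refine ⟨𝒲, fun h𝒲 => ?_, fun W hW => ⟨(hsmall hW).1, (hsmall hW).2.1⟩, hdisj⟩
  have hunion : (⋃ W ∈ 𝒲, {i | (V i ∩ W).Nonempty}).Countable :=
    h𝒲.biUnion fun W hW => (hsmall hW).2.2
  have hcover : univ ⊆ ⋃ W ∈ 𝒲, {i | (V i ∩ W).Nonempty} := fun i _ =>
    let ⟨_, hW, hi⟩ := hmeets i
    mem_biUnion hW hi
  exact not_countable_univ (hunion.mono hcover)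

/-- a space admitting an uncountable locally finite family of nonempty open
sets admits an uncountable family of pairwise disjoint nonempty open sets. -/
theorem statement5 {Z : Type u} [TopologicalSpace Z] {ι : Type v} [Uncountable ι]
    (V : ι → Set Z) (hopen : ∀ i, IsOpen (V i)) (hne : ∀ i, (V i).Nonempty)
    (hlf : LocallyFinite V) :
    ∃ 𝒲 : Set (Set Z), ¬ 𝒲.Countable ∧ (∀ W ∈ 𝒲, IsOpen W ∧ W.Nonempty) ∧
      𝒲.Pairwise Disjoint :=
  statement5_general V (fun i => (hopen i).interior_eq.symm ▸ hne i) fun x =>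
    (hlf x).imp fun _ ht => ht.imp_right Set.Finite.countable
end

section
/- Let (X_t)_{t∈T} be a family of nonempty topological spaces, X = ∏_{t∈T} X_t, and let E ⊆ X be a set such that for every continuous function f : E → ℝ there exist an at most countable set T₀ ⊆ T and a continuous mapping f₀ : p_{T₀}(E) → ℝ with f = f₀ ∘ (p_{T₀}|_E). Then for every set A which is functionally open in the subspace E there exists an at most countable set T₀ ⊆ T such that A depends on T₀ and p_{T₀}(A) is functionally open in the subspace p_{T₀}(E). -/
/-!
If `f = f₀ ∘ p` on `E`, then `{f ≠ 0}` is the preimage of `{f₀ ≠ 0}` under the map `E → p(E)`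
induced by `p`. Being a preimage, it contains every point of `E` with the same `p`-value as one of
its points, and since `E → p(E)` is onto, its image is all of `{f₀ ≠ 0}`.
-/

open Set Topology

theorem functionallyOpen_iff_exists_support {Z : Type*} [TopologicalSpace Z] {A : Set Z} :
    FunctionallyOpen A ↔ ∃ f : Z → ℝ, Continuous f ∧ A = Function.support f :=
  exists_congr fun _ ↦ and_congr_right' (compl_eq_comm.trans eq_comm)

section ImageFactorization

variable {Z Y : Type*} {p : Z → Y} {E A : Set Z} {B : Set (p '' E)}

theorem mem_of_preimage_val_eq_preimage_imageFactorization (hAE : A ⊆ E)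
    (hAB : ((↑) : E → Z) ⁻¹' A = E.imageFactorization p ⁻¹' B)
    {x y : Z} (hx : x ∈ A) (hy : y ∈ E) (hxy : p x = p y) : y ∈ A := by
  have mem_iff (z : E) : (z : Z) ∈ A ↔ E.imageFactorization p z ∈ B := Set.ext_iff.mp hAB z
  have factorization_eq :
      E.imageFactorization p ⟨x, hAE hx⟩ = E.imageFactorization p ⟨y, hy⟩ := Subtype.ext hxy
  exact (mem_iff ⟨y, hy⟩).mpr (factorization_eq ▸ (mem_iff ⟨x, hAE hx⟩).mp hx)

theorem preimage_val_image_eq_image_imageFactorization (hAE : A ⊆ E) :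
    ((↑) : ↥(p '' E) → Y) ⁻¹' (p '' A) = E.imageFactorization p '' ((↑) ⁻¹' A) := by
  rw [← Subtype.val_injective.image_injective.eq_iff, Subtype.image_preimage_coe,
    inter_eq_right.mpr (image_mono hAE), ← image_comp, imageFactorization_eq, image_comp,
    Subtype.image_preimage_coe, inter_eq_right.mpr hAE]

theorem preimage_val_image_eq_of_preimage_val_eq (hAE : A ⊆ E)
    (hAB : ((↑) : E → Z) ⁻¹' A = E.imageFactorization p ⁻¹' B) :
    ((↑) : ↥(p '' E) → Y) ⁻¹' (p '' A) = B := by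
  rw [preimage_val_image_eq_image_imageFactorization hAE, hAB,
    image_preimage_eq B imageFactorization_surjective]

end ImageFactorization

theorem statement7_general {ι Z : Type*} {Y : ι → Type*} [TopologicalSpace Z]
    [∀ i, TopologicalSpace (Y i)] (p : ∀ i, Z → Y i) (I : Set ι) (E : Set Z)
    (hfac : ∀ f : E → ℝ, Continuous f →
      ∃ i ∈ I, ∃ f₀ : ↥(p i '' E) → ℝ, Continuous f₀ ∧
        ∀ x : E, f x = f₀ (E.imageFactorization (p i) x))
    (A : Set Z) (hAE : A ⊆ E) (hA : FunctionallyOpen ((↑) ⁻¹' A : Set E)) :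
    ∃ i ∈ I, (∀ x ∈ A, ∀ y ∈ E, p i x = p i y → y ∈ A) ∧
      FunctionallyOpen ((↑) ⁻¹' (p i '' A) : Set ↥(p i '' E)) := by
  obtain ⟨f, hf, hAf⟩ := functionallyOpen_iff_exists_support.mp hA
  obtain ⟨i, hi, f₀, hf₀, hff₀⟩ := hfac f hf
  have hAf₀ : ((↑) : E → Z) ⁻¹' A = E.imageFactorization (p i) ⁻¹' Function.support f₀ := by
    rw [hAf, funext hff₀, ← Function.support_comp_eq_preimage, Function.comp_def]
  refine ⟨i, hi, fun x hx y hy hxy ↦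
    mem_of_preimage_val_eq_preimage_imageFactorization hAE hAf₀ hx hy hxy, ?_⟩
  exact functionallyOpen_iff_exists_support.mpr
    ⟨f₀, hf₀, preimage_val_image_eq_of_preimage_val_eq hAE hAf₀⟩

/-- if every continuous real function on `E ⊆ ∏ t, X t` factors continuously
through a projection onto countably many coordinates, then every functionally open subset
`A` of the subspace `E` depends on some countable `T₀ ⊆ T` and its projection is
functionally open in `p_{T₀}(E)`. -/
theorem statement7 {T : Type u} {X : T → Type v} [∀ t, TopologicalSpace (X t)]
    [∀ t, Nonempty (X t)] (E : Set (∀ t, X t))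
    (hfac : ∀ f : ↥E → ℝ, Continuous f →
      ∃ T₀ : Set T, T₀.Countable ∧
        ∃ f₀ : ↥(proj T₀ '' E) → ℝ, Continuous f₀ ∧
          ∀ x : ↥E, f x = f₀ ⟨proj T₀ x.1, ⟨x.1, x.2, rfl⟩⟩)
    (A : Set (∀ t, X t)) (hAE : A ⊆ E)
    (hA : FunctionallyOpen (Subtype.val ⁻¹' A : Set ↥E)) :
    ∃ T₀ : Set T, T₀.Countable ∧
      (∀ x ∈ A, ∀ y ∈ E, proj T₀ x = proj T₀ y → y ∈ A) ∧
      FunctionallyOpen (Subtype.val ⁻¹' (proj T₀ '' A) : Set ↥(proj T₀ '' E)) :=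
  statement7_general proj {T₀ | T₀.Countable} E hfac A hAE hA
end

section
/- Let 0 ≤ α < ω₁, let (X_t)_{t∈T} be a family of nonempty topological spaces, X = ∏_{t∈T} X_t, and let E ⊆ X be a set such that for every continuous function f : E → ℝ there exist an at most countable set T₀ ⊆ T and a continuous mapping f₀ : p_{T₀}(E) → ℝ with f = f₀ ∘ (p_{T₀}|_E). Then for every set A of the functionally additive (respectively, functionally multiplicative) class α in the subspace E there exists an at most countable set T₀ ⊆ T such that A depends on T₀ and p_{T₀}(A) is of the functionally additive (respectively, functionally multiplicative) class α in the subspace p_{T₀}(E). -/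
open Set Topology

/-! Call a family of maps `π i : Z → Y i` σ-directed if any countably many of them factor
continuously through a single one. If every continuous real function on `Z` factors continuously
through some `π i`, then every set of class `α` in `Z` is the preimage under some `π i` of a set of
class `α`: for zero sets and their complements this is the factorization hypothesis, and in a
countable union or intersection σ-directedness makes all the members preimages under a common
`π j`. The maps `E → p_S(E)` with `S` countable form such a family, since a countable union of
countable sets is countable; as they are onto, the set found in `p_S(E)` is the projection of the
given one. -/

theorem FunctionallyClosed.preimage {Y Z : Type*} [TopologicalSpace Y] [TopologicalSpace Z]
    {g : Y → Z} {A : Set Z} (hA : FunctionallyClosed A) (hg : Continuous g) :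
    FunctionallyClosed (g ⁻¹' A) := by
  obtain ⟨f, hf, rfl⟩ := hA
  exact ⟨f ∘ g, hf.comp hg, rfl⟩

theorem FunctionallyOpen.preimage {Y Z : Type*} [TopologicalSpace Y] [TopologicalSpace Z]
    {g : Y → Z} {A : Set Z} (hA : FunctionallyOpen A) (hg : Continuous g) :
    FunctionallyOpen (g ⁻¹' A) :=
  FunctionallyClosed.preimage hA hg

theorem FunctionallyClosed.compl {Z : Type*} [TopologicalSpace Z] {A : Set Z}
    (hA : FunctionallyClosed A) : FunctionallyOpen Aᶜ := by
  rwa [FunctionallyOpen, compl_compl]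

theorem FunClass.preimage {Y Z : Type*} [TopologicalSpace Y] [TopologicalSpace Z]
    {g : Y → Z} {b : Bool} {α : Ordinal.{0}} {A : Set Z} (hA : FunClass Z b α A)
    (hg : Continuous g) : FunClass Y b α (g ⁻¹' A) := by
  induction hA with
  | open_ A hA => exact .open_ _ (hA.preimage hg)
  | closed_ A hA => exact .closed_ _ (hA.preimage hg)
  | union α A β hα hβ _ ih =>
    rw [preimage_iUnion]
    exact .union α _ β hα hβ ih
  | inter α A β hα hβ _ ih =>
    rw [preimage_iInter]
    exact .inter α _ β hα hβ ih

section SigmaDirected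

variable {Z I : Type*} {Y : I → Type*} [∀ i, TopologicalSpace (Y i)] {π : ∀ i, Z → Y i}

/-- A family of maps `π i : Z → Y i` is σ-directed if any countably many of its members factor
through a common member by continuous maps. It abstracts the projections of a subset of a product
onto countable sets of coordinates. -/
def SigmaDirected (π : ∀ i, Z → Y i) : Prop :=
  ∀ i : ℕ → I, ∃ j, ∀ n, ∃ g : Y j → Y (i n), Continuous g ∧ g ∘ π j = π (i n)

theorem SigmaDirected.exists_common_preimage (hπ : SigmaDirected π) {b : Bool}
    {β : ℕ → Ordinal.{0}} {A : ℕ → Set Z}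
    (hA : ∀ n, ∃ i, ∃ C : Set (Y i), FunClass (Y i) b (β n) C ∧ π i ⁻¹' C = A n) :
    ∃ j, ∃ C : ℕ → Set (Y j), (∀ n, FunClass (Y j) b (β n) (C n)) ∧ ∀ n, π j ⁻¹' C n = A n := by
  choose i C hC hCA using hA
  obtain ⟨j, hj⟩ := hπ i
  choose g hg hgπ using hj
  refine ⟨j, fun n => g n ⁻¹' C n, fun n => (hC n).preimage (hg n), fun n => ?_⟩
  rw [← preimage_comp, hgπ, hCA]

variable [TopologicalSpace Z]

theorem FunctionallyClosed.exists_preimage_eq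
    (hfac : ∀ f : Z → ℝ, Continuous f → ∃ i, ∃ f₀ : Y i → ℝ, Continuous f₀ ∧ f = f₀ ∘ π i)
    {A : Set Z} (hA : FunctionallyClosed A) :
    ∃ i, ∃ C : Set (Y i), FunctionallyClosed C ∧ π i ⁻¹' C = A := by
  obtain ⟨f, hf, rfl⟩ := hA
  obtain ⟨i, f₀, hf₀, rfl⟩ := hfac f hf
  exact ⟨i, f₀ ⁻¹' {0}, ⟨f₀, hf₀, rfl⟩, rfl⟩

theorem FunClass.exists_preimage_eq (hπ : SigmaDirected π)
    (hfac : ∀ f : Z → ℝ, Continuous f → ∃ i, ∃ f₀ : Y i → ℝ, Continuous f₀ ∧ f = f₀ ∘ π i)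
    {b : Bool} {α : Ordinal.{0}} {A : Set Z} (hA : FunClass Z b α A) :
    ∃ i, ∃ C : Set (Y i), FunClass (Y i) b α C ∧ π i ⁻¹' C = A := by
  induction hA with
  | open_ A hA =>
    obtain ⟨i, C, hC, hCA⟩ := FunctionallyClosed.exists_preimage_eq hfac hA
    exact ⟨i, Cᶜ, .open_ _ hC.compl, by rw [preimage_compl, hCA, compl_compl]⟩
  | closed_ A hA =>
    obtain ⟨i, C, hC, hCA⟩ := hA.exists_preimage_eq hfac
    exact ⟨i, C, .closed_ _ hC, hCA⟩
  | union α A β hα hβ _ ih =>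
    obtain ⟨j, C, hC, hCA⟩ := hπ.exists_common_preimage ih
    exact ⟨j, ⋃ n, C n, .union α C β hα hβ hC, by rw [preimage_iUnion, iUnion_congr hCA]⟩
  | inter α A β hα hβ _ ih =>
    obtain ⟨j, C, hC, hCA⟩ := hπ.exists_common_preimage ih
    exact ⟨j, ⋂ n, C n, .inter α C β hα hβ hC, by rw [preimage_iInter, iInter_congr hCA]⟩

end SigmaDirected

theorem sigmaDirected_imageFactorization_proj {T : Type*} {X : T → Type*}
    [∀ t, TopologicalSpace (X t)] (E : Set (∀ t, X t)) {𝒮 : Set (Set T)}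
    (h𝒮 : ∀ S : ℕ → Set T, (∀ n, S n ∈ 𝒮) → ∃ S' ∈ 𝒮, ∀ n, S n ⊆ S') :
    SigmaDirected fun S : 𝒮 => imageFactorization (proj S.1) E := by
  intro S
  obtain ⟨S', hS', hSS'⟩ := h𝒮 (fun n => S n) fun n => (S n).2
  refine ⟨⟨S', hS'⟩, fun n => ?_⟩
  have maps_image : MapsTo (domRestrict₂ (hSS' n)) (proj (X := X) S' '' E) (proj (S n).1 '' E) :=
    mapsTo_image_iff.mpr fun x hx => ⟨x, hx, rfl⟩
  exact ⟨maps_image.restrict, (Pi.continuous_domRestrict₂ (hSS' n)).restrict maps_image, rfl⟩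

section ImageFactorization

variable {X Y : Type*} {f : X → Y} {E A : Set X} {C : Set (f '' E)}

theorem mem_of_imageFactorization_preimage_eq (hAE : A ⊆ E)
    (hC : imageFactorization f E ⁻¹' C = Subtype.val ⁻¹' A) {x y : X} (hx : x ∈ A) (hy : y ∈ E)
    (hxy : f x = f y) : y ∈ A := by
  have mem_iff (z : E) : imageFactorization f E z ∈ C ↔ z.1 ∈ A := Set.ext_iff.mp hC z
  have same_image : imageFactorization f E ⟨x, hAE hx⟩ = imageFactorization f E ⟨y, hy⟩ :=
    Subtype.ext hxy
  exact (mem_iff ⟨y, hy⟩).mp (same_image ▸ (mem_iff ⟨x, hAE hx⟩).mpr hx)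

theorem preimage_val_image_eq_of_imageFactorization_preimage_eq (hAE : A ⊆ E)
    (hC : imageFactorization f E ⁻¹' C = Subtype.val ⁻¹' A) :
    Subtype.val ⁻¹' (f '' A) = C := by
  rw [← image_preimage_eq C imageFactorization_surjective, hC]
  ext z
  constructor
  · rintro ⟨x, hx, hxz⟩
    exact ⟨⟨x, hAE hx⟩, hx, Subtype.ext hxz⟩
  · rintro ⟨x, hx, rfl⟩
    exact ⟨x, hx, rfl⟩

end ImageFactorization

theorem statement8_general {T : Type*} {X : T → Type*} [∀ t, TopologicalSpace (X t)]
    (E : Set (∀ t, X t)) {𝒮 : Set (Set T)}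
    (h𝒮 : ∀ S : ℕ → Set T, (∀ n, S n ∈ 𝒮) → ∃ S' ∈ 𝒮, ∀ n, S n ⊆ S')
    (hfac : ∀ f : E → ℝ, Continuous f →
      ∃ S ∈ 𝒮, ∃ f₀ : proj S '' E → ℝ, Continuous f₀ ∧
        ∀ x : E, f x = f₀ ⟨proj S x.1, x.1, x.2, rfl⟩)
    (α : Ordinal.{0}) (b : Bool) (A : Set (∀ t, X t)) (hAE : A ⊆ E)
    (hA : FunClass E b α (Subtype.val ⁻¹' A)) :
    ∃ S ∈ 𝒮, (∀ x ∈ A, ∀ y ∈ E, proj S x = proj S y → y ∈ A) ∧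
      FunClass (proj S '' E) b α (Subtype.val ⁻¹' (proj S '' A)) := by
  have hfac' (f : E → ℝ) (hf : Continuous f) : ∃ S : 𝒮, ∃ f₀ : proj S.1 '' E → ℝ,
      Continuous f₀ ∧ f = f₀ ∘ imageFactorization (proj S.1) E := by
    obtain ⟨S, hS, f₀, hf₀, hff₀⟩ := hfac f hf
    exact ⟨⟨S, hS⟩, f₀, hf₀, funext hff₀⟩
  obtain ⟨⟨S, hS⟩, C, hC, hCA⟩ :=
    hA.exists_preimage_eq (sigmaDirected_imageFactorization_proj E h𝒮) hfac'
  refine ⟨S, hS, fun x hx y hy => mem_of_imageFactorization_preimage_eq hAE hCA hx hy, ?_⟩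
  rwa [preimage_val_image_eq_of_imageFactorization_preimage_eq hAE hCA]

/-- if every continuous real function on `E ⊆ ∏ t, X t` factors continuously
through a projection onto countably many coordinates, then for `α < ω₁` every subset `A`
of the functionally additive (`b = true`), resp. multiplicative (`b = false`), class `α`
in the subspace `E` depends on some countable `T₀ ⊆ T` and its projection is of the same
class `α` in `p_{T₀}(E)`. -/
theorem statement8 {T : Type u} {X : T → Type v} [∀ t, TopologicalSpace (X t)]
    [∀ t, Nonempty (X t)] (E : Set (∀ t, X t))
    (hfac : ∀ f : ↥E → ℝ, Continuous f →
      ∃ T₀ : Set T, T₀.Countable ∧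
        ∃ f₀ : ↥(proj T₀ '' E) → ℝ, Continuous f₀ ∧
          ∀ x : ↥E, f x = f₀ ⟨proj T₀ x.1, ⟨x.1, x.2, rfl⟩⟩)
    (α : Ordinal.{0}) (hα : α < (Cardinal.aleph 1).ord) (b : Bool)
    (A : Set (∀ t, X t)) (hAE : A ⊆ E)
    (hA : FunClass ↥E b α (Subtype.val ⁻¹' A)) :
    ∃ T₀ : Set T, T₀.Countable ∧
      (∀ x ∈ A, ∀ y ∈ E, proj T₀ x = proj T₀ y → y ∈ A) ∧
      FunClass ↥(proj T₀ '' E) b α (Subtype.val ⁻¹' (proj T₀ '' A)) :=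
  statement8_general E (𝒮 := {S | S.Countable})
    (fun S hS => ⟨⋃ n, S n, countable_iUnion hS, subset_iUnion S⟩) hfac α b A hAE hA
end
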